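/- Apery's constant satisfies ζ(3) = −(64/(3π))·β(4) + (16π²/27) · (1/2 + 3G/π − 3·Σ_{n=1}^{∞} ζ(2n) / ((2n+1)(2n+3)·16^n)). -/

import Mathlib

/-!
Put `a = π / 2`. Both sides of the identity come from evaluating
`I = ∫₀ᵃ x (a² - x²) cot (x / 2) dx` in two ways.

* The expansion `∑ ζ(2n) u²ⁿ = (1 - πu cot (πu)) / 2` (`hasSum_zetaR_mul_pow`), taken at
  `u = x / (2π)` and integrated term by term against `a² - x²`, expresses `I` through
  `∑ ζ(2n) / ((2n+1)(2n+3) 16ⁿ)` (`hasSum_integral_zetaR`).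
* Formally `cot (x / 2) = 2 ∑ sin (k x)`. Because `x (a² - x²)` vanishes at `0`, this may be
  integrated against that weight: with `kern x = x (a² - x²) / sin (x / 2)`, the integrals
  `∫ kern x cos ((k + 1/2) x)` telescope (`integral_kern_succ`) and tend to `0` by the
  Riemann–Lebesgue lemma. The moments `∫ x (a² - x²) sin (k x)` are elementary combinations of
  `sin (kπ/2) / k²`, `cos (kπ/2) / k³` and `sin (kπ/2) / k⁴`, whose sums are `β(2)`,
  `-(3/32) ζ(3)` and `β(4)` (`integral_kern_cos`).

Equating the two values and solving for `ζ(3)` gives the formula.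
-/

open Real

/-- Real Riemann zeta values via the series `∑ 1/k^m`. -/
noncomputable def zetaR (m : ℕ) : ℝ := ∑' k : ℕ, 1 / ((k : ℝ) + 1) ^ m


/-- Dirichlet beta function at natural arguments. -/
noncomputable def betaR (s : ℕ) : ℝ := ∑' n : ℕ, (-1 : ℝ) ^ n / (2 * (n : ℝ) + 1) ^ s

open MeasureTheory Filter Topology

/-! ### The generating function of the even zeta values -/

lemma summable_zetaR {m : ℕ} (hm : 1 < m) : Summable fun k : ℕ => 1 / ((k : ℝ) + 1) ^ m := by
  have := (summable_nat_add_iff 1).2 (Real.summable_one_div_nat_pow.2 hm)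
  simpa using this

lemma zetaR_nonneg (m : ℕ) : 0 ≤ zetaR m := tsum_nonneg fun k => by positivity

lemma zetaR_le_zetaR_two (n : ℕ) : zetaR (2 * (n + 1)) ≤ zetaR 2 := by
  refine (summable_zetaR (by lia)).tsum_le_tsum (fun k => ?_) (summable_zetaR (by norm_num))
  gcongr
  · simp
  · lia

/-- The partial fraction expansion of the cotangent, in real form. -/
lemma tsum_cot_partial_fractions {u : ℝ} (hu0 : 0 < u) (hu : u ≤ 1 / 4) :
    ∑' k : ℕ, u ^ 2 / (((k : ℝ) + 1) ^ 2 - u ^ 2)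
      = (1 - π * u * (Real.cos (π * u) / Real.sin (π * u))) / 2 := by
  have hlt (k : ℕ) : u ^ 2 < ((k : ℝ) + 1) ^ 2 := by
    have : (0 : ℝ) ≤ k := k.cast_nonneg
    gcongr
    linarith
  have hmem : (u : ℂ) ∈ Complex.integerComplement := by
    rintro ⟨m, hm⟩
    have hm' : (m : ℝ) = u := by exact_mod_cast hm
    have h1 : (0 : ℝ) < m := by linarith
    have h2 : (m : ℝ) < 1 := by linarith
    norm_cast at h1 h2
    lia
  have hc := cot_series_rep' hmem
  have hterm (n : ℕ) : (1 / ((u : ℂ) - (n + 1)) + 1 / ((u : ℂ) + (n + 1)))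
      = ((-(2 / u) * (u ^ 2 / (((n : ℝ) + 1) ^ 2 - u ^ 2)) : ℝ) : ℂ) := by
    have hn : (0 : ℝ) ≤ n := n.cast_nonneg
    have h1 : u - (n + 1) ≠ 0 := by linarith
    have h2 : u + (n + 1) ≠ 0 := by positivity
    have h3 : ((n : ℝ) + 1) ^ 2 - u ^ 2 ≠ 0 := by linarith [hlt n]
    have : 1 / (u - (n + 1)) + 1 / (u + (n + 1))
        = -(2 / u) * (u ^ 2 / (((n : ℝ) + 1) ^ 2 - u ^ 2)) := by
      rw [div_add_div _ _ h1 h2, ← mul_div_assoc, div_eq_div_iff (mul_ne_zero h1 h2) h3]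
      field_simp
      ring
    rw [← this]; push_cast; rfl
  simp_rw [hterm] at hc
  rw [← Complex.ofReal_tsum, tsum_mul_left] at hc
  have hc' : π * (Real.cos (π * u) / Real.sin (π * u)) - 1 / u
      = -(2 / u) * ∑' k : ℕ, u ^ 2 / (((k : ℝ) + 1) ^ 2 - u ^ 2) := by
    have : ((π * (Real.cos (π * u) / Real.sin (π * u)) - 1 / u : ℝ) : ℂ)
      = ((-(2 / u) * ∑' k : ℕ, u ^ 2 / (((k : ℝ) + 1) ^ 2 - u ^ 2) : ℝ) : ℂ) := by
      rw [← hc, Complex.cot]; push_cast; rfl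
    exact_mod_cast this
  generalize (∑' k : ℕ, u ^ 2 / (((k : ℝ) + 1) ^ 2 - u ^ 2)) = T at hc' ⊢
  generalize Real.cos (π * u) / Real.sin (π * u) = C at hc' ⊢
  field_simp at hc'
  linarith

/-- The generating function `∑ ζ(2n) u²ⁿ = (1 - πu cot (πu)) / 2`: expand each partial fraction
as a geometric series and exchange the two sums. -/
lemma hasSum_zetaR_mul_pow {u : ℝ} (hu0 : 0 < u) (hu : u ≤ 1 / 4) :
    HasSum (fun n : ℕ => zetaR (2 * (n + 1)) * u ^ (2 * (n + 1)))
      ((1 - π * u * (Real.cos (π * u) / Real.sin (π * u))) / 2) := by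
  have hlt (k : ℕ) : u ^ 2 < ((k : ℝ) + 1) ^ 2 := by
    have : (0 : ℝ) ≤ k := k.cast_nonneg
    gcongr
    linarith
  have hgeom (k : ℕ) : HasSum (fun n : ℕ => (u ^ 2 / ((k : ℝ) + 1) ^ 2) ^ (n + 1))
      (u ^ 2 / (((k : ℝ) + 1) ^ 2 - u ^ 2)) := by
    have h1 : u ^ 2 / ((k : ℝ) + 1) ^ 2 < 1 := (div_lt_one (by positivity)).2 (hlt k)
    have := (hasSum_geometric_of_lt_one (by positivity) h1).mul_left (u ^ 2 / ((k : ℝ) + 1) ^ 2)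
    convert! this using 1
    · ext n; ring
    · have := hlt k
      have h2 : ((k : ℝ) + 1) ^ 2 - u ^ 2 ≠ 0 := by linarith
      have h3 : (1 : ℝ) - u ^ 2 / ((k : ℝ) + 1) ^ 2 ≠ 0 := by linarith
      field_simp
  have hle (k : ℕ) : u ^ 2 / (((k : ℝ) + 1) ^ 2 - u ^ 2) ≤ 1 / ((k : ℝ) + 1) ^ 2 := by
    have h0 : (0 : ℝ) ≤ k := k.cast_nonneg
    rw [div_le_div_iff₀ (by linarith [hlt k]) (by positivity)]
    have hu2 : u ^ 2 ≤ 1 / 16 := by nlinarith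
    have hk2 : (1 : ℝ) ≤ ((k : ℝ) + 1) ^ 2 := by nlinarith
    nlinarith
  have hsum : Summable fun k : ℕ => u ^ 2 / (((k : ℝ) + 1) ^ 2 - u ^ 2) :=
    Summable.of_nonneg_of_le (fun k => div_nonneg (by positivity) (by linarith [hlt k])) hle
      (summable_zetaR (by norm_num))
  have hprod : Summable fun p : ℕ × ℕ => (u ^ 2 / ((p.1 : ℝ) + 1) ^ 2) ^ (p.2 + 1) := by
    refine (summable_prod_of_nonneg (fun p => by positivity)).2 ⟨fun k => (hgeom k).summable, ?_⟩
    simpa only [(hgeom _).tsum_eq] using hsum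
  have hrow (n : ℕ) : ∑' k : ℕ, (u ^ 2 / ((k : ℝ) + 1) ^ 2) ^ (n + 1)
      = zetaR (2 * (n + 1)) * u ^ (2 * (n + 1)) := by
    rw [zetaR, ← tsum_mul_right]
    congr 1; ext k
    rw [div_pow, ← pow_mul, ← pow_mul]; ring
  have h1 : ∑' n : ℕ, ∑' k : ℕ, (u ^ 2 / ((k : ℝ) + 1) ^ 2) ^ (n + 1)
      = ∑' k : ℕ, ∑' n : ℕ, (u ^ 2 / ((k : ℝ) + 1) ^ 2) ^ (n + 1) :=
    Summable.tsum_comm (f := fun k n : ℕ => (u ^ 2 / ((k : ℝ) + 1) ^ 2) ^ (n + 1)) hprod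
  have h2 : Summable fun n : ℕ => ∑' k : ℕ, (u ^ 2 / ((k : ℝ) + 1) ^ 2) ^ (n + 1) :=
    hprod.prod_symm.prod
  simp only [hrow, (hgeom _).tsum_eq, tsum_cot_partial_fractions hu0 hu] at h1 h2
  rw [← h1]
  exact h2.hasSum

/-! ### Moments of the weight -/

/-- The polynomial weight vanishes at both endpoints, so no `1 / k` term appears. -/
lemma integral_sin_moment {k : ℝ} (hk : k ≠ 0) (a : ℝ) :
    ∫ x in (0 : ℝ)..a, x * (a ^ 2 - x ^ 2) * Real.sin (k * x) =
      -2 * a ^ 2 * (Real.sin (k * a) / k ^ 2) - 6 * a * (Real.cos (k * a) / k ^ 3)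
        + 6 * (Real.sin (k * a) / k ^ 4) := by
  -- The primitive produced by integrating by parts four times.
  have hd (x : ℝ) : HasDerivAt (fun x : ℝ => -(x * (a ^ 2 - x ^ 2)) * (Real.cos (k * x) / k)
      + (a ^ 2 - 3 * x ^ 2) * (Real.sin (k * x) / k ^ 2) - 6 * x * (Real.cos (k * x) / k ^ 3)
      + 6 * (Real.sin (k * x) / k ^ 4)) (x * (a ^ 2 - x ^ 2) * Real.sin (k * x)) x := by
    have hl : HasDerivAt (fun x : ℝ => k * x) k x := by simpa using (hasDerivAt_id x).const_mul k
    have hs := hl.sin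
    have hc := hl.cos
    have hx := hasDerivAt_id' x
    have hx2 : HasDerivAt (fun x : ℝ => x ^ 2) (2 * x) x := by simpa using hasDerivAt_pow 2 x
    convert! ((((hx.fun_mul (hx2.const_sub (a ^ 2))).fun_neg.fun_mul (hc.div_const k)).add
      (((hx2.const_mul 3).const_sub (a ^ 2)).mul (hs.div_const (k ^ 2)))).sub
      ((hx.const_mul 6).mul (hc.div_const (k ^ 3)))).add ((hs.div_const (k ^ 4)).const_mul 6) using 1
    field_simp
    ring
  rw [intervalIntegral.integral_eq_sub_of_hasDerivAt (fun x _ => hd x)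
    (Continuous.intervalIntegrable (by fun_prop) _ _)]
  simp
  ring

lemma integral_even_moment (a : ℝ) (n : ℕ) :
    ∫ x in (0 : ℝ)..a, (a ^ 2 - x ^ 2) * x ^ (2 * n) =
      2 * a ^ (2 * n + 3) / ((2 * n + 1) * (2 * n + 3)) := by
  have : ∀ x : ℝ, (a ^ 2 - x ^ 2) * x ^ (2 * n) = a ^ 2 * x ^ (2 * n) - x ^ (2 * n + 2) := by
    intro x; ring
  simp_rw [this]
  rw [intervalIntegral.integral_sub (Continuous.intervalIntegrable (by fun_prop) _ _)
    (Continuous.intervalIntegrable (by fun_prop) _ _), intervalIntegral.integral_const_mul,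
    integral_pow, integral_pow]
  have h1 : (2 * (n : ℝ) + 1) ≠ 0 := by positivity
  have h2 : (2 * (n : ℝ) + 3) ≠ 0 := by positivity
  have h3 : (2 * (n : ℝ) + 2 + 1) ≠ 0 := by positivity
  push_cast
  simp only [ne_eq, Nat.add_eq_zero_iff, one_ne_zero, and_false, not_false_eq_true, zero_pow,
    sub_zero]
  field_simp
  ring

/-! ### Quarter-period sine and cosine series -/

lemma sin_odd_mul_pi_div_two (m : ℕ) : Real.sin ((2 * m + 1) * (π / 2)) = (-1) ^ m := by
  rw [show (2 * (m : ℝ) + 1) * (π / 2) = m * π + π / 2 by ring, Real.sin_add_pi_div_two,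
    Real.cos_nat_mul_pi]

lemma cos_odd_mul_pi_div_two (m : ℕ) : Real.cos ((2 * m + 1) * (π / 2)) = 0 := by
  rw [show (2 * (m : ℝ) + 1) * (π / 2) = m * π + π / 2 by ring, Real.cos_add_pi_div_two,
    Real.sin_nat_mul_pi, neg_zero]

lemma hasSum_betaR {s : ℕ} (hs : 1 < s) :
    HasSum (fun n : ℕ => (-1 : ℝ) ^ n / (2 * (n : ℝ) + 1) ^ s) (betaR s) := by
  refine Summable.hasSum (Summable.of_norm_bounded (summable_zetaR hs) fun n => ?_)
  rw [norm_div, norm_pow, norm_neg, norm_one, one_pow, Real.norm_of_nonneg (by positivity)]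
  gcongr
  have : (0 : ℝ) ≤ n := n.cast_nonneg
  linarith

lemma hasSum_sin_div_pow {s : ℕ} (hs : 1 < s) :
    HasSum (fun n : ℕ => Real.sin (((n : ℝ) + 1) * (π / 2)) / ((n : ℝ) + 1) ^ s) (betaR s) := by
  rw [← add_zero (betaR s)]
  refine HasSum.even_add_odd ?_ ?_
  · convert! hasSum_betaR hs using 2 with m
    push_cast
    rw [sin_odd_mul_pi_div_two]
  · convert! hasSum_zero using 2 with m
    push_cast
    rw [show (2 * (m : ℝ) + 1 + 1) * (π / 2) = (m + 1 : ℕ) * π by push_cast; ring,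
      Real.sin_nat_mul_pi, zero_div]

lemma hasSum_alternating_cube :
    HasSum (fun n : ℕ => (-1 : ℝ) ^ (n + 1) / ((n : ℝ) + 1) ^ 3) (-(3 / 4) * zetaR 3) := by
  have hz := (summable_zetaR (m := 3) (by norm_num)).hasSum
  have hodd : HasSum (fun n : ℕ => 1 / (((2 * n + 1 : ℕ) : ℝ) + 1) ^ 3) (zetaR 3 / 8) := by
    convert! hz.div_const 8 using 2 with n
    push_cast
    field_simp
    ring
  have hev : Summable fun n : ℕ => 1 / (((2 * n : ℕ) : ℝ) + 1) ^ 3 :=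
    hz.summable.comp_injective (i := fun n => 2 * n) (fun a b h => by simpa using h)
  have htot := (HasSum.even_add_odd (f := fun n : ℕ => 1 / ((n : ℝ) + 1) ^ 3) hev.hasSum
    hodd).unique hz
  change _ = zetaR 3 at htot
  rw [show -(3 / 4) * zetaR 3 = -(∑' n : ℕ, 1 / (((2 * n : ℕ) : ℝ) + 1) ^ 3) + zetaR 3 / 8 by
    linarith]
  refine HasSum.even_add_odd ?_ ?_
  · convert! hev.hasSum.neg using 2 with n
    rw [pow_succ, pow_mul]; norm_num [neg_div]
  · convert! hodd using 2 with n
    rw [show 2 * n + 1 + 1 = 2 * (n + 1) by ring, pow_mul]; norm_num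

lemma hasSum_cos_div_cube :
    HasSum (fun n : ℕ => Real.cos (((n : ℝ) + 1) * (π / 2)) / ((n : ℝ) + 1) ^ 3)
      (-(3 / 32) * zetaR 3) := by
  rw [← zero_add (-(3 / 32) * zetaR 3)]
  refine HasSum.even_add_odd ?_ ?_
  · convert! hasSum_zero using 2 with m
    push_cast
    rw [cos_odd_mul_pi_div_two, zero_div]
  · rw [show -(3 / 32) * zetaR 3 = -(3 / 4) * zetaR 3 / 8 by ring]
    convert! hasSum_alternating_cube.div_const 8 using 2 with m
    push_cast
    rw [show (2 * (m : ℝ) + 1 + 1) * (π / 2) = (m + 1 : ℕ) * π by push_cast; ring,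
      Real.cos_nat_mul_pi]
    field_simp
    ring

/-! ### The cotangent integral by Fourier expansion -/

/-- Riemann–Lebesgue lemma along the half-integer frequencies. -/
lemma tendsto_integral_mul_cos (h : ℝ → ℝ) {a : ℝ} (ha : 0 ≤ a)
    (hh : ContinuousOn h (Set.Icc 0 a)) :
    Tendsto (fun k : ℕ => ∫ x in (0 : ℝ)..a, h x * Real.cos (((k : ℝ) + 1 / 2) * x)) atTop
      (𝓝 0) := by
  have hw : Tendsto (fun k : ℕ => ((k : ℝ) + 1 / 2) / (2 * π)) atTop (cocompact ℝ) := by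
    refine Tendsto.mono_right ?_ atTop_le_cocompact
    exact (tendsto_atTop_add_const_right _ _ tendsto_natCast_atTop_atTop).atTop_div_const
      (by positivity)
  have hRL := (Real.tendsto_integral_exp_smul_cocompact
    ((Set.Ioc 0 a).indicator fun x => (h x : ℂ))).comp hw
  have hre := (Complex.continuous_re.tendsto _).comp hRL
  rw [Complex.zero_re] at hre
  refine hre.congr fun k => ?_
  simp only [Function.comp_apply]
  have hind : ∀ v : ℝ, Real.fourierChar (-(v * (((k : ℝ) + 1 / 2) / (2 * π)))) •
      (Set.Ioc 0 a).indicator (fun x => (h x : ℂ)) v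
      = (Set.Ioc 0 a).indicator (fun v => Complex.exp ((-(((k : ℝ) + 1 / 2) * v) : ℝ) * Complex.I)
          * (h v : ℂ)) v := by
    intro v
    by_cases hv : v ∈ Set.Ioc 0 a
    · rw [Set.indicator_of_mem hv, Set.indicator_of_mem hv, Circle.smul_def,
        Real.fourierChar_apply, smul_eq_mul]
      congr 4
      field_simp
    · rw [Set.indicator_of_notMem hv, Set.indicator_of_notMem hv, smul_zero]
  simp_rw [hind]
  rw [integral_indicator measurableSet_Ioc, intervalIntegral.integral_of_le ha]
  have hint : IntegrableOn (fun v => Complex.exp ((-(((k : ℝ) + 1 / 2) * v) : ℝ) * Complex.I)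
          * (h v : ℂ)) (Set.Ioc 0 a) := by
    refine (ContinuousOn.integrableOn_Icc ?_).mono_set Set.Ioc_subset_Icc_self
    refine ContinuousOn.mul (Continuous.continuousOn (by fun_prop)) ?_
    exact Complex.continuous_ofReal.comp_continuousOn hh
  have := integral_re (𝕜 := ℂ) hint
  simp only [RCLike.re_eq_complex_re] at this
  rw [← this]
  refine integral_congr_ae (Eventually.of_forall fun v => ?_)
  simp only [Complex.re_mul_ofReal, Complex.exp_ofReal_mul_I_re, Real.cos_neg]
  ring

lemma sinc_pos_of_mem {x : ℝ} (h0 : 0 ≤ x) (h1 : x ≤ π / 2) : 0 < Real.sinc (x / 2) := by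
  rcases h0.eq_or_lt with rfl | h
  · simp
  · rw [Real.sinc_of_ne_zero (by positivity)]
    exact div_pos (Real.sin_pos_of_pos_of_lt_pi (by positivity) (by linarith [Real.pi_pos]))
      (by positivity)

/-- The kernel `(a² - x²) x / sin (x / 2)` on `[0, a]` with `a = π / 2`, continuously extended
to `x = 0` by means of `sinc`. -/
noncomputable def kern (x : ℝ) : ℝ := ((π / 2) ^ 2 - x ^ 2) * (2 / Real.sinc (x / 2))

lemma continuousOn_kern : ContinuousOn kern (Set.Icc 0 (π / 2)) := by
  refine ContinuousOn.mul (by fun_prop) (continuousOn_const.div ?_ fun x hx =>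
    (sinc_pos_of_mem hx.1 hx.2).ne')
  exact (Real.continuous_sinc.comp (by fun_prop)).continuousOn

lemma kern_mul_sin {x : ℝ} (h0 : 0 ≤ x) (h1 : x ≤ π / 2) :
    kern x * Real.sin (x / 2) = x * ((π / 2) ^ 2 - x ^ 2) := by
  rcases h0.eq_or_lt with rfl | h
  · simp
  · have hs := sinc_pos_of_mem h0 h1
    have : Real.sin (x / 2) = Real.sinc (x / 2) * (x / 2) := by
      rw [Real.sinc_of_ne_zero (by positivity)]; field_simp
    rw [this, kern]
    field_simp

/-- The recursion `cos ((k + 3/2) x) = cos ((k + 1/2) x) - 2 sin ((k + 1) x) sin (x / 2)`,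
integrated against `kern`. -/
lemma integral_kern_succ (k : ℕ) :
    ∫ x in (0 : ℝ)..(π / 2), kern x * Real.cos (((k + 1 : ℕ) + 1 / 2) * x) =
      (∫ x in (0 : ℝ)..(π / 2), kern x * Real.cos (((k : ℝ) + 1 / 2) * x)) -
      2 * ∫ x in (0 : ℝ)..(π / 2), x * ((π / 2) ^ 2 - x ^ 2) * Real.sin (((k : ℝ) + 1) * x) := by
  have hpi : (0 : ℝ) ≤ π / 2 := by positivity
  rw [← intervalIntegral.integral_const_mul, ← intervalIntegral.integral_sub]
  · refine intervalIntegral.integral_congr fun x hx => ?_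
    rw [Set.uIcc_of_le hpi] at hx
    have e1 : (((k + 1 : ℕ) : ℝ) + 1 / 2) * x = ((k : ℝ) + 1) * x + x / 2 := by push_cast; ring
    have e2 : ((k : ℝ) + 1 / 2) * x = ((k : ℝ) + 1) * x - x / 2 := by ring
    simp only [e1, e2, Real.cos_add, Real.cos_sub, ← kern_mul_sin hx.1 hx.2]
    ring
  · refine ContinuousOn.intervalIntegrable ?_
    rw [Set.uIcc_of_le hpi]
    exact continuousOn_kern.mul (Continuous.continuousOn (by fun_prop))
  · exact Continuous.intervalIntegrable (by fun_prop) _ _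

/-- The integral `∫ x (a² - x²) cot (x / 2)` over `[0, a]`, `a = π / 2`, in terms of
`G`, `ζ(3)` and `β(4)`. -/
lemma integral_kern_cos :
    ∫ x in (0 : ℝ)..(π / 2), kern x * Real.cos (x / 2) =
      2 * (-2 * (π / 2) ^ 2 * betaR 2 - 6 * (π / 2) * (-(3 / 32) * zetaR 3) + 6 * betaR 4) := by
  have hP : HasSum (fun k : ℕ => 2 * ∫ x in (0 : ℝ)..(π / 2),
      x * ((π / 2) ^ 2 - x ^ 2) * Real.sin (((k : ℝ) + 1) * x))
      (2 * (-2 * (π / 2) ^ 2 * betaR 2 - 6 * (π / 2) * (-(3 / 32) * zetaR 3) + 6 * betaR 4)) := by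
    have := ((((hasSum_sin_div_pow (s := 2) (by norm_num)).mul_left (-2 * (π / 2) ^ 2)).sub
      (hasSum_cos_div_cube.mul_left (6 * (π / 2)))).add
      ((hasSum_sin_div_pow (s := 4) (by norm_num)).mul_left 6)).mul_left 2
    refine this.congr_fun fun k => ?_
    rw [integral_sin_moment (by positivity)]
  have hlim := tendsto_integral_mul_cos kern (by positivity) continuousOn_kern
  set J : ℕ → ℝ := fun k => ∫ x in (0 : ℝ)..(π / 2), kern x * Real.cos (((k : ℝ) + 1 / 2) * x)
    with hJ
  have hpart (N : ℕ) : ∑ k ∈ Finset.range N, (2 * ∫ x in (0 : ℝ)..(π / 2),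
      x * ((π / 2) ^ 2 - x ^ 2) * Real.sin (((k : ℝ) + 1) * x)) = J 0 - J N := by
    rw [← Finset.sum_range_sub']
    refine Finset.sum_congr rfl fun k _ => ?_
    have := integral_kern_succ k
    simp only [hJ]
    linarith
  have h1 : Tendsto (fun N => J 0 - J N) atTop (𝓝 (J 0 - 0)) := hlim.const_sub _
  have h2 := hP.tendsto_sum_nat
  simp_rw [hpart] at h2
  have h3 := tendsto_nhds_unique h1 h2
  rw [sub_zero] at h3
  rw [← h3, hJ]
  refine intervalIntegral.integral_congr fun x _ => ?_
  simp only [Nat.cast_zero, zero_add]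
  ring_nf

/-! ### The cotangent integral by power series -/

/-- `hasSum_zetaR_mul_pow` at `u = x / (2π)`, multiplied by the weight `(π / 2)² - x²`. -/
lemma hasSum_kern_cos {x : ℝ} (h0 : 0 < x) (h1 : x ≤ π / 2) :
    HasSum (fun n : ℕ => ((π / 2) ^ 2 - x ^ 2) *
        (zetaR (2 * (n + 1)) * (x / (2 * π)) ^ (2 * (n + 1))))
      (((π / 2) ^ 2 - x ^ 2) / 2 - kern x * Real.cos (x / 2) / 4) := by
  have hpi := Real.pi_pos
  have hu : x / (2 * π) ≤ 1 / 4 := by rw [div_le_iff₀ (by positivity)]; linarith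
  have := (hasSum_zetaR_mul_pow (u := x / (2 * π)) (by positivity) hu).mul_left
    ((π / 2) ^ 2 - x ^ 2)
  convert! this using 1
  have e : π * (x / (2 * π)) = x / 2 := by field_simp
  have hs : 0 < Real.sin (x / 2) :=
    Real.sin_pos_of_pos_of_lt_pi (by positivity) (by linarith)
  rw [e, kern, Real.sinc_of_ne_zero (by positivity)]
  field_simp
  ring

/-- Termwise integration of `hasSum_kern_cos` over `[0, π / 2]`; the factor `16⁻ⁿ` of the series
comes from `((π / 2) / (2π))² = 1 / 16`. -/
lemma hasSum_integral_zetaR :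
    HasSum (fun n : ℕ => 2 * (π / 2) ^ 3 * (zetaR (2 * (n + 1)) /
          ((2 * ((n : ℝ) + 1) + 1) * (2 * ((n : ℝ) + 1) + 3) * 16 ^ (n + 1))))
      ((π / 2) ^ 3 / 3 - (∫ x in (0 : ℝ)..(π / 2), kern x * Real.cos (x / 2)) / 4) := by
  have hpi := Real.pi_pos
  have hpi2 : (0 : ℝ) ≤ π / 2 := by positivity
  have key := intervalIntegral.hasSum_integral_of_dominated_convergence (μ := volume)
    (a := 0) (b := π / 2)
    (F := fun (n : ℕ) x => ((π / 2) ^ 2 - x ^ 2) *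
        (zetaR (2 * (n + 1)) * (x / (2 * π)) ^ (2 * (n + 1))))
    (f := fun x => ((π / 2) ^ 2 - x ^ 2) / 2 - kern x * Real.cos (x / 2) / 4)
    (fun n _ => (π / 2) ^ 2 * (zetaR 2 * (1 / 16) ^ (n + 1)))
    (fun n => Continuous.aestronglyMeasurable (by fun_prop))
    (fun n => Eventually.of_forall fun x hx => ?_)
    (Eventually.of_forall fun x _ => ?_) intervalIntegrable_const
    (Eventually.of_forall fun x hx => ?_)
  · convert! key using 1
    · ext n
      have e : ∀ x : ℝ, ((π / 2) ^ 2 - x ^ 2) *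
          (zetaR (2 * (n + 1)) * (x / (2 * π)) ^ (2 * (n + 1))) =
          zetaR (2 * (n + 1)) / (2 * π) ^ (2 * (n + 1)) *
          (((π / 2) ^ 2 - x ^ 2) * x ^ (2 * (n + 1))) := by
        intro x; rw [div_pow x]; ring
      simp_rw [e]
      rw [intervalIntegral.integral_const_mul, integral_even_moment]
      have h16 : (2 * π) ^ (2 * (n + 1)) = (16 : ℝ) ^ (n + 1) * (π / 2) ^ (2 * (n + 1)) := by
        rw [pow_mul, pow_mul, ← mul_pow]; congr 1; ring
      rw [h16, pow_add (π / 2) (2 * (n + 1)) 3]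
      push_cast
      have : (π / 2) ^ (2 * (n + 1)) ≠ 0 := by positivity
      generalize (π / 2) ^ (2 * (n + 1)) = q at this ⊢
      have h3 : (2 * ((n : ℝ) + 1) + 1) ≠ 0 := by positivity
      have h4 : (2 * ((n : ℝ) + 1) + 3) ≠ 0 := by positivity
      field_simp
    · rw [intervalIntegral.integral_sub, intervalIntegral.integral_div,
        intervalIntegral.integral_div]
      · have := integral_even_moment (π / 2) 0
        simp only [mul_zero, pow_zero, mul_one] at this
        rw [this]
        norm_num
        ring
      · exact Continuous.intervalIntegrable (by fun_prop) _ _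
      · refine ContinuousOn.intervalIntegrable ?_
        rw [Set.uIcc_of_le hpi2]
        exact (continuousOn_kern.mul (Continuous.continuousOn (by fun_prop))).div_const _
  · rw [Set.uIoc_of_le hpi2] at hx
    have hx0 := hx.1
    have hu : x / (2 * π) ≤ 1 / 4 := by rw [div_le_iff₀ (by positivity)]; linarith [hx.2]
    have hsq : 0 ≤ (π / 2) ^ 2 - x ^ 2 := by nlinarith [hx.2]
    have hz := zetaR_nonneg (2 * (n + 1))
    rw [Real.norm_of_nonneg (by positivity)]
    have hp : (x / (2 * π)) ^ (2 * (n + 1)) ≤ (1 / 16) ^ (n + 1) := by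
      rw [pow_mul]
      have : (x / (2 * π)) ^ 2 ≤ (1 / 4) ^ 2 := by gcongr
      gcongr
      linarith
    have hz2 := zetaR_nonneg 2
    gcongr
    · nlinarith
    · exact zetaR_le_zetaR_two n
  · have := (summable_nat_add_iff 1).2
      (summable_geometric_of_lt_one (r := (1 / 16 : ℝ)) (by norm_num) (by norm_num))
    exact (this.mul_left _).mul_left _
  · rw [Set.uIoc_of_le hpi2] at hx
    exact hasSum_kern_cos hx.1 hx.2

theorem zeta_three_repr_catalan :
    zetaR 3 = -(64 / (3 * π)) * betaR 4 + (16 * π ^ 2 / 27) *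
      (1 / 2 + 3 * betaR 2 / π -
        3 * ∑' n : ℕ, zetaR (2 * (n + 1)) /
          ((2 * ((n : ℝ) + 1) + 1) * (2 * ((n : ℝ) + 1) + 3) * 16 ^ (n + 1))) := by
  have h := hasSum_integral_zetaR.tsum_eq
  rw [tsum_mul_left, integral_kern_cos] at h
  generalize (∑' n : ℕ, zetaR (2 * (n + 1)) /
          ((2 * ((n : ℝ) + 1) + 1) * (2 * ((n : ℝ) + 1) + 3) * 16 ^ (n + 1))) = S at h ⊢
  have hpi : π ≠ 0 := Real.pi_ne_zero
  have hS : S = ((π / 2) ^ 3 / 3 - 2 * (-2 * (π / 2) ^ 2 * betaR 2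
      - 6 * (π / 2) * (-(3 / 32) * zetaR 3) + 6 * betaR 4) / 4) / (2 * (π / 2) ^ 3) := by
    rw [← h]; field_simp
  rw [hS]
  field_simp
  ring
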